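/- arXiv:1311.2011 — 2 statements merged into one kernel-verified Lean document; each statement's English description precedes it below -/
import Mathlib

section
/- Let X be a Tychonoff topological space, let 𝔅 be a bornology with compact base on X, and let 𝒰 be a nontrivial open 𝔅-cover of X. Then the set A = {f ∈ C(X,ℝ) : there exists U ∈ 𝒰 with f(x) = 1 for all x ∈ X ∖ U} satisfies A ⊆ C(X,ℝ) ∖ {0̄} and 0̄ lies in the closure of A in C_𝔅(X); that is, A ∈ Ω_{0̄}. -/
open Set Topology

universe u

/-- A bornology on `X`: a collection of subsets covering `X`, closed under
taking subsets and under finite unions. -/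
structure IsBornology {X : Type*} (𝔅 : Set (Set X)) : Prop where
  covers : ⋃₀ 𝔅 = Set.univ
  empty_mem : ∅ ∈ 𝔅
  subset_mem : ∀ ⦃A B : Set X⦄, B ∈ 𝔅 → A ⊆ B → A ∈ 𝔅
  union_mem : ∀ ⦃A B : Set X⦄, A ∈ 𝔅 → B ∈ 𝔅 → A ∪ B ∈ 𝔅

/-- `𝔅` has a compact base: every member of `𝔅` is contained in a compact member of `𝔅`. -/
def HasCompactBase {X : Type*} [TopologicalSpace X] (𝔅 : Set (Set X)) : Prop :=
  ∀ B ∈ 𝔅, ∃ K ∈ 𝔅, IsCompact K ∧ B ⊆ K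

/-- The set of continuous real-valued functions on `X` (as a bare type, to be
topologized by a bornology). -/
def CFn (X : Type u) [TopologicalSpace X] : Type u := {f : X → ℝ // Continuous f}

/-- The zero function as an element of `CFn X`. -/
def zeroFn (X : Type u) [TopologicalSpace X] : CFn X := ⟨fun _ => 0, continuous_const⟩

/-- The basic "ball" `⟨B, ε⟩[f] = {g : ∀ x ∈ B, |f x − g x| < ε}`. -/
def unifBall {X : Type u} [TopologicalSpace X] (f : CFn X) (B : Set X) (ε : ℝ) :
    Set (CFn X) :=
  {g | ∀ x ∈ B, |f.1 x - g.1 x| < ε}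

/-- The topology of uniform convergence on members of a bornology `𝔅`:
a set is open iff around each of its points it contains a basic ball
`⟨B, ε⟩[f]` with `B ∈ 𝔅`, `ε > 0`.  This makes `CFn X` into `C_𝔅(X)`. -/
def bornTopology {X : Type u} [TopologicalSpace X] (𝔅 : Set (Set X))
    (hB : IsBornology 𝔅) : TopologicalSpace (CFn X) where
  IsOpen U := ∀ f ∈ U, ∃ B ∈ 𝔅, ∃ ε > (0 : ℝ), unifBall f B ε ⊆ U
  isOpen_univ := fun f _ => ⟨∅, hB.empty_mem, 1, one_pos, fun _ _ => trivial⟩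
  isOpen_inter := by
    intro U V hU hV f hf
    obtain ⟨B₁, hB₁, ε₁, hε₁, h₁⟩ := hU f hf.1
    obtain ⟨B₂, hB₂, ε₂, hε₂, h₂⟩ := hV f hf.2
    refine ⟨B₁ ∪ B₂, hB.union_mem hB₁ hB₂, min ε₁ ε₂, lt_min hε₁ hε₂, fun g hg => ⟨?_, ?_⟩⟩
    · exact h₁ fun x hx => lt_of_lt_of_le (hg x (Or.inl hx)) (min_le_left _ _)
    · exact h₂ fun x hx => lt_of_lt_of_le (hg x (Or.inr hx)) (min_le_right _ _)
  isOpen_sUnion := by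
    intro S hS f hf
    obtain ⟨U, hU, hfU⟩ := hf
    obtain ⟨B, hB', ε, hε, h⟩ := hS U hU f hfU
    exact ⟨B, hB', ε, hε, h.trans (Set.subset_sUnion_of_mem hU)⟩

/-- `Ω_z`: the family of all subsets of `Z ∖ {z}` having `z` in their closure. -/
def OmegaAt {Z : Type*} [TopologicalSpace Z] (z : Z) : Set (Set Z) :=
  {A | A ⊆ {z}ᶜ ∧ z ∈ closure A}

/-- `𝒢` is a `𝔅`-cover of `X`: every member of `𝔅` is contained in a member of `𝒢`. -/
def IsBCover {X : Type*} (𝔅 : Set (Set X)) (𝒢 : Set (Set X)) : Prop :=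
  ∀ B ∈ 𝔅, ∃ G ∈ 𝒢, B ⊆ G

/-- `𝒪_𝔅`: the family of all open `𝔅`-covers of `X`. -/
def OpenBCovers {X : Type*} [TopologicalSpace X] (𝔅 : Set (Set X)) : Set (Set (Set X)) :=
  {𝒰 | (∀ U ∈ 𝒰, IsOpen U) ∧ IsBCover 𝔅 𝒰}

/-- `𝒢` is a K-cover of `X`: every compact subset of `X` is contained in a member of `𝒢`. -/
def IsKCover {X : Type*} [TopologicalSpace X] (𝒢 : Set (Set X)) : Prop :=
  ∀ K : Set X, IsCompact K → ∃ G ∈ 𝒢, K ⊆ G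

/-- `𝒦`: the family of all open K-covers of `X`. -/
def KCovers (X : Type*) [TopologicalSpace X] : Set (Set (Set X)) :=
  {𝒰 | (∀ U ∈ 𝒰, IsOpen U) ∧ IsKCover 𝒰}

/-- Player II has a winning strategy in the game `G₁(𝒜, 𝒞)` (of length `ω`):
a function assigning to each finite sequence `(A₀, …, Aₙ)` of moves of player I an
element of `Aₙ`, such that in any play following it the chosen points form a member of `𝒞`. -/
def G1WinII {T : Type*} (𝒜 𝒞 : Set (Set T)) : Prop :=
  ∃ σ : (n : ℕ) → (Fin (n + 1) → Set T) → T,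
    (∀ (n : ℕ) (h : Fin (n + 1) → Set T), (∀ i, h i ∈ 𝒜) → σ n h ∈ h (Fin.last n)) ∧
    ∀ A : ℕ → Set T, (∀ n, A n ∈ 𝒜) →
      (Set.range fun n => σ n fun i => A i.1) ∈ 𝒞

/-- Player II has a winning strategy in the transfinite game `G₁^α(𝒜, 𝒞)` of length `α`. -/
def G1WinIIOrd {T : Type*} (α : Ordinal.{0}) (𝒜 𝒞 : Set (Set T)) : Prop :=
  ∃ σ : (γ : {γ : Ordinal.{0} // γ < α}) → ({δ : Ordinal.{0} // δ ≤ γ.1} → Set T) → T,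
    (∀ (γ : {γ : Ordinal.{0} // γ < α}) (h : {δ : Ordinal.{0} // δ ≤ γ.1} → Set T),
      (∀ δ, h δ ∈ 𝒜) → σ γ h ∈ h ⟨γ.1, le_rfl⟩) ∧
    ∀ A : {γ : Ordinal.{0} // γ < α} → Set T, (∀ γ, A γ ∈ 𝒜) →
      (Set.range fun γ : {γ : Ordinal.{0} // γ < α} =>
        σ γ fun δ => A ⟨δ.1, lt_of_le_of_lt δ.2 γ.2⟩) ∈ 𝒞

/-- The selection principle `S₁(𝒜, 𝒞)`. -/
def S1 {T : Type*} (𝒜 𝒞 : Set (Set T)) : Prop :=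
  ∀ A : ℕ → Set T, (∀ n, A n ∈ 𝒜) →
    ∃ a : ℕ → T, (∀ n, a n ∈ A n) ∧ Set.range a ∈ 𝒞

/-- `Z` has countable tightness. -/
def CountablyTight (Z : Type*) [TopologicalSpace Z] : Prop :=
  ∀ (z : Z) (A : Set Z), z ∈ closure A → ∃ B ⊆ A, B.Countable ∧ z ∈ closure B

/-- `Z` is productively countably tight: `Z × Y` has countable tightness
for every countably tight space `Y`. -/
def ProductivelyCountablyTight (Z : Type u) [TopologicalSpace Z] : Prop :=
  ∀ (Y : Type u) [TopologicalSpace Y], CountablyTight Y → CountablyTight (Z × Y)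

/-- `Z` has tightness at most `κ`. -/
def TightnessLE (Z : Type u) [TopologicalSpace Z] (κ : Cardinal.{u}) : Prop :=
  ∀ (z : Z) (A : Set Z), z ∈ closure A → ∃ B ⊆ A, Cardinal.mk B ≤ κ ∧ z ∈ closure B

/-- `κ ∈ Sp(Z)`: for every space `Y` of tightness at most `κ`, the product `Z × Y`
has tightness at most `κ`. -/
def MemSp (Z : Type u) [TopologicalSpace Z] (κ : Cardinal.{u}) : Prop :=
  ∀ (Y : Type u) [TopologicalSpace Y], TightnessLE Y κ → TightnessLE (Z × Y) κ

/-- `G` is a `G_κ`-set: an intersection of at most `κ` open sets. -/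
def IsGKappaSet {X : Type u} [TopologicalSpace X] (κ : Cardinal.{u}) (G : Set X) : Prop :=
  ∃ 𝒪 : Set (Set X), (∀ O ∈ 𝒪, IsOpen O) ∧ Cardinal.mk 𝒪 ≤ κ ∧ G = ⋂₀ 𝒪

/-- `G` is a `G_δ`-set: an intersection of countably many open sets. -/
def IsGDeltaSet {X : Type*} [TopologicalSpace X] (G : Set X) : Prop :=
  ∃ 𝒪 : Set (Set X), (∀ O ∈ 𝒪, IsOpen O) ∧ 𝒪.Countable ∧ G = ⋂₀ 𝒪

/-- A family `ℙ` of collections of subsets of `Z` is `κ`-singular at `z`. -/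
def KappaSingularAt {Z : Type u} [TopologicalSpace Z] (κ : Cardinal.{u})
    (ℙ : Set (Set (Set Z))) (z : Z) : Prop :=
  (∀ ξ ∈ ℙ, ∀ A ∈ ξ, Cardinal.mk A ≤ κ) ∧
  (∀ ξ ∈ ℙ, ∀ F : Finset (Set Z), ↑F ⊆ ξ → (⋂₀ (F : Set (Set Z))).Nonempty) ∧
  (∀ O : Set Z, IsOpen O → z ∈ O → ∃ ξ ∈ ℙ, ∃ A ∈ ξ, A ⊆ O) ∧
  (∀ ℰ ⊆ ℙ, Cardinal.mk ℰ ≤ κ → ∃ c : Set (Set Z) → Set Z,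
    (∀ ξ ∈ ℰ, c ξ ∈ ξ) ∧ z ∉ closure (⋃ ξ ∈ ℰ, c ξ))

/-- `X` is an Alster space. -/
def Alster (X : Type*) [TopologicalSpace X] : Prop :=
  ∀ 𝒢 : Set (Set X), (∀ G ∈ 𝒢, IsGDeltaSet G) → IsKCover 𝒢 →
    ∃ 𝒢' ⊆ 𝒢, 𝒢'.Countable ∧ ⋃₀ 𝒢' = Set.univ

/-- `X` is strongly Alster. -/
def StronglyAlster (X : Type*) [TopologicalSpace X] : Prop :=
  ∀ 𝒢 : Set (Set X), (∀ G ∈ 𝒢, IsGDeltaSet G) → IsKCover 𝒢 →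
    ∃ 𝒢' ⊆ 𝒢, 𝒢'.Countable ∧ IsKCover 𝒢'

/-- `X` is productively Lindelöf. -/
def ProductivelyLindelof (X : Type u) [TopologicalSpace X] : Prop :=
  ∀ (Y : Type u) [TopologicalSpace Y], LindelofSpace Y → LindelofSpace (X × Y)

/-- `X` is hemicompact. -/
def Hemicompact (X : Type*) [TopologicalSpace X] : Prop :=
  ∃ K : ℕ → Set X, (∀ n, IsCompact (K n)) ∧ ∀ C : Set X, IsCompact C → ∃ n, C ⊆ K n

section Separation

variable {X : Type*} [TopologicalSpace X] [CompletelyRegularSpace X]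

theorem exists_continuous_zero_one_of_isCompact_of_isClosed {K C : Set X} (hK : IsCompact K)
    (hC : IsClosed C) (hKC : Disjoint K C) :
    ∃ f : C(X, ℝ), EqOn f 0 K ∧ EqOn f 1 C ∧ ∀ x, f x ∈ Icc (0 : ℝ) 1 := by
  -- The image of `K` in the Stone–Čech compactification is compact, hence closed, so the Urysohn
  -- lemma applies there even though `X` need not be normal.
  obtain ⟨D, hD, rfl⟩ := isInducing_stoneCechUnit.isClosed_iff.1 hC
  have hK' : IsClosed (stoneCechUnit '' K) := (hK.image continuous_stoneCechUnit).isClosed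
  obtain ⟨f, hf₀, hf₁, hf⟩ :=
    exists_continuous_zero_one_of_isClosed hK' hD (disjoint_image_left.2 hKC)
  exact ⟨f.comp ⟨stoneCechUnit, continuous_stoneCechUnit⟩,
    fun _ hx => hf₀ (mem_image_of_mem _ hx), fun _ hx => hf₁ hx, fun _ => hf _⟩

end Separation

section BornTopology

variable {X : Type u} [TopologicalSpace X] {𝔅 : Set (Set X)}

theorem mem_unifBall_of_eqOn {f g : CFn X} {B : Set X} {ε : ℝ} (hε : 0 < ε)
    (hfg : EqOn f.1 g.1 B) : g ∈ unifBall f B ε := fun x hx => by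
  rwa [hfg hx, sub_self, abs_zero]

theorem unifBall_mem_nhds (hB : IsBornology 𝔅) (f : CFn X) {B : Set X} (hBm : B ∈ 𝔅) {ε : ℝ}
    (hε : 0 < ε) : unifBall f B ε ∈ @nhds _ (bornTopology 𝔅 hB) f := by
  let _ := bornTopology 𝔅 hB
  -- The ball itself need not be open: `|f - g| < ε` pointwise on `B` leaves no uniform margin.
  let V : Set (CFn X) := {g | ∃ δ < ε, ∀ x ∈ B, |f.1 x - g.1 x| ≤ δ}
  have hV : IsOpen V := by
    rintro g ⟨δ, hδ, hfg⟩
    refine ⟨B, hBm, (ε - δ) / 2, half_pos (sub_pos.2 hδ), fun h hgh => ?_⟩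
    refine ⟨δ + (ε - δ) / 2, by linarith, fun x hx => ?_⟩
    calc |f.1 x - h.1 x| ≤ |f.1 x - g.1 x| + |g.1 x - h.1 x| := abs_sub_le _ _ _
      _ ≤ δ + (ε - δ) / 2 := add_le_add (hfg x hx) (hgh x hx).le
  have hfV : f ∈ V := ⟨0, hε, fun x _ => by rw [sub_self, abs_zero]⟩
  exact Filter.mem_of_superset (hV.mem_nhds hfV)
    fun g ⟨_, hδ, hfg⟩ x hx => (hfg x hx).trans_lt hδ

theorem hasBasis_nhds_bornTopology (hB : IsBornology 𝔅) (f : CFn X) :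
    (@nhds _ (bornTopology 𝔅 hB) f).HasBasis (fun p : Set X × ℝ => p.1 ∈ 𝔅 ∧ 0 < p.2)
      fun p => unifBall f p.1 p.2 := by
  let _ := bornTopology 𝔅 hB
  refine ⟨fun S => ⟨fun hS => ?_, fun ⟨_, ⟨hBm, hε⟩, hS⟩ =>
    Filter.mem_of_superset (unifBall_mem_nhds hB f hBm hε) hS⟩⟩
  obtain ⟨O, hOS, hO, hfO⟩ := mem_nhds_iff.1 hS
  obtain ⟨B, hBm, ε, hε, hball⟩ := hO f hfO
  exact ⟨(B, ε), ⟨hBm, hε⟩, hball.trans hOS⟩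

theorem mem_closure_bornTopology_iff (hB : IsBornology 𝔅) {f : CFn X} {A : Set (CFn X)} :
    f ∈ closure[bornTopology 𝔅 hB] A ↔
      ∀ B ∈ 𝔅, ∀ ε > 0, ∃ g ∈ A, g ∈ unifBall f B ε := by
  let _ := bornTopology 𝔅 hB
  rw [mem_closure_iff_nhds_basis (hasBasis_nhds_bornTopology hB f)]
  simp only [Prod.forall, and_imp]
  exact ⟨fun h B hBm ε => h B ε hBm, fun h B ε hBm => h B hBm ε⟩

end BornTopology

section OneOffMember

variable {X : Type u} [TopologicalSpace X] {𝔅 𝒰 : Set (Set X)}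

/-- The set `A` attached to a family `𝒰` of subsets of `X`: the continuous functions that are
constantly `1` off some member of `𝒰`. -/
def oneOffMember (𝒰 : Set (Set X)) : Set (CFn X) :=
  {f | ∃ U ∈ 𝒰, ∀ x ∈ Uᶜ, f.1 x = 1}

theorem zeroFn_mem_oneOffMember_iff : zeroFn X ∈ oneOffMember 𝒰 ↔ univ ∈ 𝒰 := by
  refine ⟨fun ⟨U, hU, hone⟩ => ?_, fun h => ⟨univ, h, fun x hx => (hx trivial).elim⟩⟩
  have hUniv : U = univ := eq_univ_of_forall fun x => by
    by_contra hx
    exact zero_ne_one (hone x hx)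
  exact hUniv ▸ hU

theorem exists_mem_oneOffMember_eqOn_zero [CompletelyRegularSpace X] {K U : Set X}
    (hK : IsCompact K) (hU : IsOpen U) (hKU : K ⊆ U) (hU𝒰 : U ∈ 𝒰) :
    ∃ f ∈ oneOffMember 𝒰, EqOn (zeroFn X).1 f.1 K := by
  obtain ⟨f, hf₀, hf₁, -⟩ := exists_continuous_zero_one_of_isCompact_of_isClosed hK
    hU.isClosed_compl (disjoint_compl_right_iff_subset.2 hKU)
  exact ⟨⟨f, f.continuous⟩, ⟨U, hU𝒰, hf₁⟩, hf₀.symm⟩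

theorem zeroFn_mem_closure_oneOffMember [CompletelyRegularSpace X] (hB : IsBornology 𝔅)
    (hcb : HasCompactBase 𝔅) (h𝒰 : 𝒰 ∈ OpenBCovers 𝔅) :
    zeroFn X ∈ closure[bornTopology 𝔅 hB] (oneOffMember 𝒰) := by
  refine (mem_closure_bornTopology_iff hB).2 fun B hBm ε hε => ?_
  obtain ⟨K, hKm, hK, hBK⟩ := hcb B hBm
  obtain ⟨U, hU, hKU⟩ := h𝒰.2 K hKm
  obtain ⟨f, hf, hf₀⟩ := exists_mem_oneOffMember_eqOn_zero hK (h𝒰.1 U hU) hKU hU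
  exact ⟨f, hf, mem_unifBall_of_eqOn hε (hf₀.mono hBK)⟩

end OneOffMember

theorem stmt0_general {X : Type u} [TopologicalSpace X] [CompletelyRegularSpace X]
    (𝔅 : Set (Set X)) (hB : IsBornology 𝔅) (hcb : HasCompactBase 𝔅)
    (𝒰 : Set (Set X)) (h𝒰 : 𝒰 ∈ OpenBCovers 𝔅) (hnt : Set.univ ∉ 𝒰) :
    oneOffMember 𝒰 ∈ @OmegaAt (CFn X) (bornTopology 𝔅 hB) (zeroFn X) :=
  ⟨subset_compl_singleton_iff.2 (zeroFn_mem_oneOffMember_iff.not.2 hnt),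
    zeroFn_mem_closure_oneOffMember hB hcb h𝒰⟩

/-- For a Tychonoff space `X`, a bornology `𝔅` with compact base on `X`,
and a nontrivial open `𝔅`-cover `𝒰` of `X`, the set
`A = {f ∈ C(X,ℝ) : ∃ U ∈ 𝒰, f ≡ 1 on X ∖ U}` belongs to `Ω_{0̄}` in `C_𝔅(X)`. -/
theorem stmt0 {X : Type u} [TopologicalSpace X] [T35Space X]
    (𝔅 : Set (Set X)) (hB : IsBornology 𝔅) (hcb : HasCompactBase 𝔅)
    (𝒰 : Set (Set X)) (h𝒰 : 𝒰 ∈ OpenBCovers 𝔅) (hnt : Set.univ ∉ 𝒰) :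
    {f : CFn X | ∃ U ∈ 𝒰, ∀ x ∈ Uᶜ, f.1 x = 1} ∈
      @OmegaAt (CFn X) (bornTopology 𝔅 hB) (zeroFn X) :=
  stmt0_general 𝔅 hB hcb 𝒰 h𝒰 hnt
end

section
/- Let X be a Tychonoff topological space and let 𝔅 be a bornology with compact base on X. Player II has a winning strategy in the game G₁(𝒪_𝔅, 𝒪_𝔅) played on X if and only if player II has a winning strategy in the game G₁(Ω_{0̄}, Ω_{0̄}) played on C_𝔅(X). -/
open Set Topology

universe u

/-!
A function `g` is uniformly `ε`-close to `f` on `B` exactly when `B` is contained in the open set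
`{x | |f x - g x| < ε}`. Hence `f` lies in the closure of `A` if and only if, for every `ε > 0`,
these open sets form a `𝔅`-cover as `g` runs over `A`.

From covers to functions, player II plays infinitely many games on `X` in parallel, the `k`-th one
against the covers obtained with `ε = 1 / (k + 1)`, and distributes the innings among them by the
pairing function. From functions to covers, player II answers a cover `𝒰` by looking at the
functions that differ from `f` by at least `1` outside some member of `𝒰`; complete regularity and
the compact base put `f` in the closure of these functions.
-/

namespace G1WinII

variable {T T' : Type*} {𝒜 𝒞 : Set (Set T)} {𝒜' 𝒞' : Set (Set T')}

theorem of_lift [Nonempty T'] (H : G1WinII 𝒜 𝒞) (φ : Set T' → Set T) (r : T → T' → Prop)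
    (maps : ∀ A ∈ 𝒜', φ A ∈ 𝒜) (lift : ∀ A ∈ 𝒜', ∀ a ∈ φ A, ∃ b ∈ A, r a b)
    (win : ∀ (a : ℕ → T) (b : ℕ → T'), (∀ n, r (a n) (b n)) → range a ∈ 𝒞 → range b ∈ 𝒞') :
    G1WinII 𝒜' 𝒞' := by
  obtain ⟨σ, σ_legal, σ_wins⟩ := H
  choose! l l_mem l_rel using lift
  refine ⟨fun n h => l (h (Fin.last n)) (σ n fun i => φ (h i)), fun n h hh => ?_, fun A hA => ?_⟩
  · exact l_mem _ (hh _) _ (σ_legal n _ fun i => maps _ (hh i))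
  · refine win (fun n => σ n fun i => φ (A i)) _ (fun n => ?_) (σ_wins _ fun n => maps _ (hA n))
    exact l_rel _ (hA n) _ (σ_legal n _ fun i => maps _ (hA i))

theorem mono (H : G1WinII 𝒜 𝒞) {𝒟 : Set (Set T)} (h𝒞 : 𝒞 ⊆ 𝒟) : G1WinII 𝒜 𝒟 := by
  obtain ⟨σ, σ_legal, σ_wins⟩ := H
  exact ⟨σ, σ_legal, fun A hA => h𝒞 (σ_wins A hA)⟩

theorem inter_powerset (H : G1WinII 𝒜 𝒞) {S : Set T} (h𝒜 : 𝒜 ⊆ 𝒫 S) :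
    G1WinII 𝒜 (𝒞 ∩ 𝒫 S) := by
  obtain ⟨σ, σ_legal, σ_wins⟩ := H
  refine ⟨σ, σ_legal, fun A hA => ⟨σ_wins A hA, ?_⟩⟩
  exact range_subset_iff.2 fun n => h𝒜 (hA n) (σ_legal n _ fun i => hA i)

/- The inning `Nat.pair k j` serves as the `j`-th inning of the game with target `𝒟 k`. -/
theorem iInter {𝒟 : ℕ → Set (Set T)} (H : ∀ k, G1WinII 𝒜 (𝒟 k))
    (h𝒟 : ∀ k, IsUpperSet (𝒟 k)) : G1WinII 𝒜 (⋂ k, 𝒟 k) := by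
  choose σ σ_legal σ_wins using H
  have pair_mono (k : ℕ) : Monotone (Nat.pair k) :=
    StrictMono.monotone fun _ _ => Nat.pair_lt_pair_right k
  have inning_le (n : ℕ) (i : Fin (n.unpair.2 + 1)) : Nat.pair n.unpair.1 i ≤ n :=
    (pair_mono _ (Nat.lt_succ_iff.1 i.2)).trans_eq n.pair_unpair
  refine ⟨fun n h => σ n.unpair.1 n.unpair.2 fun i =>
    h ⟨Nat.pair n.unpair.1 i, Nat.lt_succ_iff.2 (inning_le n i)⟩, fun n h hh => ?_, fun A hA => ?_⟩
  · have last_eq : (⟨Nat.pair n.unpair.1 (Fin.last n.unpair.2),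
        Nat.lt_succ_iff.2 (inning_le n _)⟩ : Fin (n + 1)) = Fin.last n :=
      Fin.ext n.pair_unpair
    exact last_eq ▸ σ_legal n.unpair.1 n.unpair.2 _ fun i => hh _
  · let pick (p : ℕ × ℕ) : T := σ p.1 p.2 fun i => A (Nat.pair p.1 i)
    refine mem_iInter.2 fun k => h𝒟 k ?_ (σ_wins k (fun j => A (Nat.pair k j)) fun j => hA _)
    rintro _ ⟨j, rfl⟩
    exact ⟨Nat.pair k j, congrArg pick (Nat.unpair_pair k j)⟩

theorem self_of_subsingleton [Subsingleton T] [Nonempty T] (h𝒜 : ∀ A ∈ 𝒜, A.Nonempty) :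
    G1WinII 𝒜 𝒜 := by
  have eq_univ : ∀ A ∈ 𝒜, A = univ := fun A hA => (h𝒜 A hA).eq_univ
  refine ⟨fun _ _ => Classical.arbitrary T, fun n h hh => ?_, fun A hA => ?_⟩
  · exact eq_univ _ (hh (Fin.last n)) ▸ mem_univ _
  · rw [(range_nonempty _).eq_univ, ← eq_univ _ (hA 0)]
    exact hA 0

end G1WinII

theorem IsBCover.of_refines {X : Type*} {𝔅 𝒢 ℋ : Set (Set X)} (h𝒢 : IsBCover 𝔅 𝒢)
    (h : ∀ G ∈ 𝒢, ∃ H ∈ ℋ, G ⊆ H) : IsBCover 𝔅 ℋ := fun B hB =>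
  let ⟨G, hG, hBG⟩ := h𝒢 B hB
  let ⟨H, hH, hGH⟩ := h G hG
  ⟨H, hH, hBG.trans hGH⟩

theorem IsBCover.nonempty {X : Type*} {𝔅 𝒢 : Set (Set X)} (h𝒢 : IsBCover 𝔅 𝒢)
    (h𝔅 : 𝔅.Nonempty) : 𝒢.Nonempty :=
  let ⟨B, hB⟩ := h𝔅
  let ⟨G, hG, _⟩ := h𝒢 B hB
  ⟨G, hG⟩

theorem isUpperSet_setOf_isBCover {X : Type*} (𝔅 : Set (Set X)) :
    IsUpperSet {𝒢 | IsBCover 𝔅 𝒢} :=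
  fun _ _ hsub h𝒢 => h𝒢.of_refines fun G hG => ⟨G, hsub hG, Subset.rfl⟩

theorem openBCovers_eq {X : Type*} [TopologicalSpace X] (𝔅 : Set (Set X)) :
    OpenBCovers 𝔅 = {𝒰 | IsBCover 𝔅 𝒰} ∩ 𝒫 {U | IsOpen U} :=
  Set.ext fun _ => and_comm

theorem omegaAt_eq {Z : Type*} [TopologicalSpace Z] (z : Z) :
    OmegaAt z = {A | z ∈ closure A} ∩ 𝒫 {z}ᶜ :=
  Set.ext fun _ => and_comm

section UniformConvergence

variable {X : Type u} [TopologicalSpace X]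

/-- The set of points at which `g` is `ε`-close to `f`. It encodes the balls of `C_𝔅(X)` as
inclusions: `g ∈ unifBall f B ε` unfolds to `B ⊆ nearSet f ε g`. -/
def nearSet (f : CFn X) (ε : ℝ) (g : CFn X) : Set X := {x | |f.1 x - g.1 x| < ε}

theorem isOpen_nearSet (f : CFn X) (ε : ℝ) (g : CFn X) : IsOpen (nearSet f ε g) :=
  isOpen_lt (f.2.sub g.2).abs continuous_const

theorem nearSet_mono {f g : CFn X} {δ ε : ℝ} (h : δ ≤ ε) : nearSet f δ g ⊆ nearSet f ε g :=
  fun _ hx => lt_of_lt_of_le hx h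

theorem unifBall_half_subset {f g : CFn X} {B : Set X} {ε : ℝ} (hg : g ∈ unifBall f B (ε / 2)) :
    unifBall g B (ε / 2) ⊆ unifBall f B ε := fun k hk x hx =>
  calc |f.1 x - k.1 x| ≤ |f.1 x - g.1 x| + |g.1 x - k.1 x| := abs_sub_le _ _ _
    _ < ε / 2 + ε / 2 := add_lt_add (hg x hx) (hk x hx)
    _ = ε := add_halves ε

theorem mem_unifBall_self (f : CFn X) (B : Set X) {ε : ℝ} (hε : 0 < ε) : f ∈ unifBall f B ε :=
  fun x _ => by rwa [sub_self, abs_zero]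

variable (𝔅 : Set (Set X)) (hB : IsBornology 𝔅)

theorem mem_nhds_bornTopology {f : CFn X} {s : Set (CFn X)} :
    s ∈ @nhds _ (bornTopology 𝔅 hB) f ↔ ∃ B ∈ 𝔅, ∃ ε > (0 : ℝ), unifBall f B ε ⊆ s := by
  let := bornTopology 𝔅 hB
  rw [mem_nhds_iff]
  constructor
  · rintro ⟨U, hUs, hU, hf⟩
    obtain ⟨B, hBm, ε, hε, hsub⟩ := hU f hf
    exact ⟨B, hBm, ε, hε, hsub.trans hUs⟩
  · rintro ⟨B, hBm, ε, hε, hsub⟩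
    refine ⟨{g | ∃ δ > (0 : ℝ), unifBall g B δ ⊆ s}, ?_, ?_, ε, hε, hsub⟩
    · rintro g ⟨δ, hδ, hg⟩
      exact hg (mem_unifBall_self g B hδ)
    · rintro g ⟨δ, hδ, hg⟩
      exact ⟨B, hBm, δ / 2, half_pos hδ, fun k hk =>
        ⟨δ / 2, half_pos hδ, (unifBall_half_subset hk).trans hg⟩⟩

theorem mem_closure_iff_isBCover {f : CFn X} {A : Set (CFn X)} :
    f ∈ closure[bornTopology 𝔅 hB] A ↔ ∀ ε > 0, IsBCover 𝔅 (nearSet f ε '' A) := by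
  let := bornTopology 𝔅 hB
  simp only [mem_closure_iff_nhds, mem_nhds_bornTopology, IsBCover, exists_mem_image]
  constructor
  · intro h ε hε B hBm
    obtain ⟨g, hgB, hgA⟩ := h _ ⟨B, hBm, ε, hε, Subset.rfl⟩
    exact ⟨g, hgA, hgB⟩
  · rintro h s ⟨B, hBm, ε, hε, hsub⟩
    obtain ⟨g, hgA, hgB⟩ := h ε hε B hBm
    exact ⟨g, hsub hgB, hgA⟩

theorem mem_closure_of_forall_nat_isBCover {f : CFn X} {A : Set (CFn X)}
    (h : ∀ k : ℕ, IsBCover 𝔅 (nearSet f (1 / (k + 1)) '' A)) :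
    f ∈ closure[bornTopology 𝔅 hB] A := by
  refine (mem_closure_iff_isBCover 𝔅 hB).2 fun ε hε => ?_
  obtain ⟨k, hk⟩ := exists_nat_one_div_lt hε
  refine (h k).of_refines (forall_mem_image.2 fun g hg => ?_)
  exact ⟨_, mem_image_of_mem _ hg, nearSet_mono hk.le⟩

theorem nearSet_image_mem_openBCovers {f : CFn X} {A : Set (CFn X)}
    (hA : f ∈ closure[bornTopology 𝔅 hB] A) {ε : ℝ} (hε : 0 < ε) :
    nearSet f ε '' A ∈ OpenBCovers 𝔅 :=
  ⟨forall_mem_image.2 fun g _ => isOpen_nearSet f ε g,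
    (mem_closure_iff_isBCover 𝔅 hB).1 hA ε hε⟩

theorem G1WinII.omegaAt_of_openBCovers (f : CFn X)
    (H : G1WinII (OpenBCovers 𝔅) (OpenBCovers 𝔅)) :
    G1WinII (@OmegaAt _ (bornTopology 𝔅 hB) f) (@OmegaAt _ (bornTopology 𝔅 hB) f) := by
  let := bornTopology 𝔅 hB
  have : Nonempty (CFn X) := ⟨f⟩
  let near (k : ℕ) : Set (Set (CFn X)) := {A | IsBCover 𝔅 (nearSet f (1 / (k + 1)) '' A)}
  have near_isUpperSet (k : ℕ) : IsUpperSet (near k) := fun _ _ hsub =>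
    isUpperSet_setOf_isBCover 𝔅 (image_mono hsub)
  have wins_near (k : ℕ) : G1WinII (OmegaAt f) (near k) := by
    refine H.of_lift (nearSet f (1 / (k + 1)) '' ·) (fun U g => nearSet f (1 / (k + 1)) g = U)
      (fun A hA => nearSet_image_mem_openBCovers 𝔅 hB hA.2 Nat.one_div_pos_of_nat)
      (fun A _ U hU => hU) fun U g hUg hU => ?_
    have image_eq : nearSet f (1 / (k + 1)) '' range g = range U := by
      rw [← range_comp]
      exact congrArg range (funext hUg)
    have cover : IsBCover 𝔅 (nearSet f (1 / (k + 1)) '' range g) := image_eq ▸ hU.2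
    exact cover
  have wins_closure : G1WinII (OmegaAt f) {A | f ∈ closure A} :=
    (G1WinII.iInter wins_near near_isUpperSet).mono fun A hA =>
      mem_closure_of_forall_nat_isBCover 𝔅 hB (mem_iInter.1 hA)
  nth_rw 2 [omegaAt_eq]
  exact wins_closure.inter_powerset fun A hA => hA.1

end UniformConvergence

theorem exists_continuous_zero_one_of_isCompact_subset_isOpen {X : Type*} [TopologicalSpace X]
    [CompletelyRegularSpace X] {K U : Set X} (hK : IsCompact K) (hU : IsOpen U) (hKU : K ⊆ U) :
    ∃ f : C(X, ℝ), EqOn f 0 K ∧ EqOn f 1 Uᶜ := by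
  have ind : IsInducing (stoneCechUnit : X → StoneCech X) := isInducing_stoneCechUnit
  obtain ⟨V, hV, rfl⟩ := ind.isOpen_iff.1 hU
  have disj : Disjoint (stoneCechUnit '' K) Vᶜ :=
    disjoint_compl_right_iff_subset.2 (image_subset_iff.2 hKU)
  obtain ⟨f, f_zero, f_one, -⟩ := exists_continuous_zero_one_of_isClosed
    (hK.image ind.continuous).isClosed hV.isClosed_compl disj
  exact ⟨f.comp ⟨stoneCechUnit, ind.continuous⟩,
    fun x hx => f_zero (mem_image_of_mem _ hx), fun x hx => f_one hx⟩

section CompletelyRegular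

variable {X : Type u} [TopologicalSpace X]

theorem exists_ne_subset_nearSet_subset [CompletelyRegularSpace X] [Nonempty X] (f : CFn X)
    {K U : Set X} (hK : IsCompact K) (hU : IsOpen U) (hKU : K ⊆ U) {ε : ℝ} (hε : 0 < ε) :
    ∃ g : CFn X, g ≠ f ∧ K ⊆ nearSet f ε g ∧ nearSet f 1 g ⊆ U := by
  obtain ⟨h, h_zero, h_one⟩ := exists_continuous_zero_one_of_isCompact_subset_isOpen hK hU hKU
  obtain ⟨δ, hδ, hδε⟩ := exists_between hε
  -- Truncating `h` below at `δ` keeps `g` different from `f` even when `K` is all of `X`.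
  let g : CFn X := ⟨fun x => f.1 x + max (h x) δ, f.2.add (h.continuous.max continuous_const)⟩
  have dist_eq (x : X) : |f.1 x - g.1 x| = max (h x) δ := by
    rw [show f.1 x - g.1 x = -max (h x) δ from sub_add_cancel_left _ _, abs_neg,
      abs_of_pos (lt_max_of_lt_right hδ)]
  refine ⟨g, fun hgf => ?_, fun x hx => ?_, fun x hx => ?_⟩
  · obtain ⟨x⟩ := ‹Nonempty X›
    have : 0 < |f.1 x - g.1 x| := dist_eq x ▸ lt_max_of_lt_right hδ
    rw [hgf, sub_self, abs_zero] at this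
    exact this.false
  · exact (dist_eq x).trans_lt (max_lt ((h_zero hx).trans_lt hε) hδε)
  · have h_lt : h x < 1 := (le_max_left _ _).trans_lt ((dist_eq x).symm.trans_lt hx)
    by_contra hxU
    exact h_lt.ne (h_one hxU)

/-- The functions other than `f` that differ from `f` by at least `1` outside some member of `𝒰`:
the move in the game on `C_𝔅(X)` that simulates the move `𝒰` in the game on `X`. -/
def deviatingOff (f : CFn X) (𝒰 : Set (Set X)) : Set (CFn X) :=
  {g | g ≠ f ∧ ∃ U ∈ 𝒰, nearSet f 1 g ⊆ U}

variable {𝔅 : Set (Set X)} (hB : IsBornology 𝔅)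

theorem deviatingOff_mem_omegaAt [CompletelyRegularSpace X] [Nonempty X]
    (hcb : HasCompactBase 𝔅) (f : CFn X) {𝒰 : Set (Set X)} (h𝒰 : 𝒰 ∈ OpenBCovers 𝔅) :
    deviatingOff f 𝒰 ∈ @OmegaAt _ (bornTopology 𝔅 hB) f := by
  refine ⟨fun g hg => hg.1, (mem_closure_iff_isBCover 𝔅 hB).2 fun ε hε B hBm => ?_⟩
  obtain ⟨K, hKm, hK, hBK⟩ := hcb B hBm
  obtain ⟨U, hU, hKU⟩ := h𝒰.2 K hKm
  obtain ⟨g, hgf, hKg, hgU⟩ := exists_ne_subset_nearSet_subset f hK (h𝒰.1 U hU) hKU hε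
  exact ⟨_, mem_image_of_mem _ ⟨hgf, U, hU, hgU⟩, hBK.trans hKg⟩

theorem G1WinII.openBCovers_of_omegaAt [CompletelyRegularSpace X] (hcb : HasCompactBase 𝔅)
    (f : CFn X)
    (H : G1WinII (@OmegaAt _ (bornTopology 𝔅 hB) f) (@OmegaAt _ (bornTopology 𝔅 hB) f)) :
    G1WinII (OpenBCovers 𝔅) (OpenBCovers 𝔅) := by
  -- On the empty space `Ω_f` is empty, so `H` carries no information.
  cases isEmpty_or_nonempty X
  · exact G1WinII.self_of_subsingleton fun 𝒰 h𝒰 => h𝒰.2.nonempty ⟨∅, hB.empty_mem⟩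
  have wins_cover : G1WinII (OpenBCovers 𝔅) {𝒰 | IsBCover 𝔅 𝒰} := by
    refine H.of_lift (deviatingOff f) (fun g U => nearSet f 1 g ⊆ U)
      (fun 𝒰 => deviatingOff_mem_omegaAt hB hcb f) (fun 𝒰 _ g hg => hg.2) fun g U hgU hg => ?_
    have cover : IsBCover 𝔅 (nearSet f 1 '' range g) :=
      (mem_closure_iff_isBCover 𝔅 hB).1 hg.2 1 one_pos
    refine cover.of_refines (forall_mem_image.2 (forall_mem_range.2 fun n => ?_))
    exact ⟨U n, mem_range_self n, hgU n⟩
  nth_rw 2 [openBCovers_eq]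
  exact wins_cover.inter_powerset fun 𝒰 h𝒰 => h𝒰.1

end CompletelyRegular

theorem stmt2_general {X : Type u} [TopologicalSpace X] [CompletelyRegularSpace X]
    (𝔅 : Set (Set X)) (hB : IsBornology 𝔅) (hcb : HasCompactBase 𝔅) (f : CFn X) :
    G1WinII (OpenBCovers 𝔅) (OpenBCovers 𝔅) ↔
      G1WinII (@OmegaAt (CFn X) (bornTopology 𝔅 hB) f)
        (@OmegaAt (CFn X) (bornTopology 𝔅 hB) f) :=
  ⟨G1WinII.omegaAt_of_openBCovers 𝔅 hB f, G1WinII.openBCovers_of_omegaAt hB hcb f⟩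

/-- Player II has a winning strategy in `G₁(𝒪_𝔅, 𝒪_𝔅)` on `X` iff
player II has a winning strategy in `G₁(Ω_{0̄}, Ω_{0̄})` on `C_𝔅(X)`. -/
theorem stmt2 {X : Type u} [TopologicalSpace X] [T35Space X]
    (𝔅 : Set (Set X)) (hB : IsBornology 𝔅) (hcb : HasCompactBase 𝔅) :
    G1WinII (OpenBCovers 𝔅) (OpenBCovers 𝔅) ↔
      G1WinII (@OmegaAt (CFn X) (bornTopology 𝔅 hB) (zeroFn X))
        (@OmegaAt (CFn X) (bornTopology 𝔅 hB) (zeroFn X)) := by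
  exact stmt2_general 𝔅 hB hcb (zeroFn X)
end
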